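/- For every GAP instance, every ε ∈ (0,1/6), and every p ∈ (0,1], there exist a set Q ⊆ E and a real number d with 1 ≤ d ≤ 2·⌈1/ε⌉·(K+2)·(τ(ε²)/p + 1), where K := ⌈ln(1/ε³)/ln(1+ε²)⌉, such that (1/d)·1_Q lies in the convex hull in ℝ^E of the indicator vectors {1_S : S ⊆ E feasible}, and E_R[GAP(Q ∩ R)] ≥ (1 − 6ε)·E_R[GAP(R)], where R is the p-sampled active set of E. -/

import Mathlib

open Finset

/-- `τ(ε) := 1 + ln(1/ε) + √(ln²(1/ε) + 2 ln(1/ε))`. -/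
noncomputable def tau (ε : ℝ) : ℝ :=
  1 + Real.log (1 / ε) + Real.sqrt ((Real.log (1 / ε)) ^ 2 + 2 * Real.log (1 / ε))

/-- Expectation of `f` over the random active set `R ⊆ E` obtained by `p`-sampling. -/
noncomputable def sampleExp {ι : Type*} [DecidableEq ι] (E : Finset ι) (p : ℝ)
    (f : Finset ι → ℝ) : ℝ :=
  ∑ A ∈ E.powerset, p ^ A.card * (1 - p) ^ (E.card - A.card) * f A

/-- Total value of a partial assignment `σ` of items (within the ground set `E`)
to knapsacks: `v(σ) = ∑_{i ∈ dom σ} v_{i,σ(i)}`. -/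
noncomputable def assignValue {ι : Type*} {m : ℕ} (E : Finset ι)
    (v : ι → Fin m → ℝ) (σ : ι → Option (Fin m)) : ℝ :=
  ∑ i ∈ E, (σ i).elim 0 (v i)

/-- Total weight placed by the partial assignment `σ` into knapsack `j`. -/
noncomputable def knapWeight {ι : Type*} [DecidableEq ι] {m : ℕ} (E : Finset ι)
    (w : ι → Fin m → ℝ) (σ : ι → Option (Fin m)) (j : Fin m) : ℝ :=
  ∑ i ∈ E, if σ i = some j then w i j else 0

/-- `GAP(A)`: the maximum value of a feasible assignment whose domain lies in `A`. -/
noncomputable def gapOPT {ι : Type*} [DecidableEq ι] {m : ℕ} (E : Finset ι)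
    (C : Fin m → ℝ) (v w : ι → Fin m → ℝ) (A : Finset ι) : ℝ :=
  sSup {x : ℝ | ∃ σ : ι → Option (Fin m), (∀ i, σ i ≠ none → i ∈ A) ∧
    (∀ j, knapWeight E w σ j ≤ C j) ∧ x = assignValue E v σ}

/-!
Query, for every knapsack and every geometric class of values, disjoint greedy lists (densest items
first in the bottom class, lightest first in the others) of weight about `τ(ε²)/p` times the
capacity, in each of `⌈1/ε⌉` phases. Some phase carries at most an `ε` fraction of the expected
optimum. Drop the items of its lists from the optimum and resample their activity: by a Chernoff
bound each list that was filled contains, with probability at least `1 - ε²`, a knapsack-full of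
active items, and those can replace the unqueried items of their class without exceeding their
weight. Each knapsack sees `⌈1/ε⌉ * (K + 1)` lists, and splitting their items into feasible bins
by next fit bounds the degree.
-/

open scoped Function

section Sampling

variable {ι κ : Type*} [DecidableEq ι] {E Z L : Finset ι} {p : ℝ} {f g : Finset ι → ℝ}

lemma sampleExp_congr (h : ∀ A ⊆ E, f A = g A) : sampleExp E p f = sampleExp E p g :=
  sum_congr rfl fun A hA => by rw [h A (mem_powerset.1 hA)]

lemma sampleExp_mono (hp₀ : 0 ≤ p) (hp₁ : p ≤ 1) (h : ∀ A ⊆ E, f A ≤ g A) :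
    sampleExp E p f ≤ sampleExp E p g := by
  have : 0 ≤ 1 - p := sub_nonneg.2 hp₁
  exact sum_le_sum fun A hA => mul_le_mul_of_nonneg_left (h A (mem_powerset.1 hA)) (by positivity)

lemma sampleExp_sub (E : Finset ι) (p : ℝ) (f g : Finset ι → ℝ) :
    sampleExp E p (fun A => f A - g A) = sampleExp E p f - sampleExp E p g := by
  simp only [sampleExp, mul_sub, sum_sub_distrib]

lemma sampleExp_sum (E : Finset ι) (p : ℝ) (s : Finset κ) (f : κ → Finset ι → ℝ) :
    sampleExp E p (fun A => ∑ k ∈ s, f k A) = ∑ k ∈ s, sampleExp E p (f k) := by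
  simp only [sampleExp, mul_sum]
  exact sum_comm

lemma sampleExp_add (E : Finset ι) (p : ℝ) (f g : Finset ι → ℝ) :
    sampleExp E p (fun A => f A + g A) = sampleExp E p f + sampleExp E p g := by
  simp only [sampleExp, mul_add, sum_add_distrib]

lemma sampleExp_mul_left (E : Finset ι) (p c : ℝ) (f : Finset ι → ℝ) :
    sampleExp E p (fun A => c * f A) = c * sampleExp E p f := by
  simp only [sampleExp, mul_sum, mul_left_comm c]

lemma sampleExp_const (E : Finset ι) (p c : ℝ) : sampleExp E p (fun _ => c) = c := by
  rw [sampleExp, ← sum_mul, sum_pow_mul_eq_add_pow, add_sub_cancel, one_pow, one_mul]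

lemma sampleExp_nonneg (hp₀ : 0 ≤ p) (hp₁ : p ≤ 1) (h : ∀ A ⊆ E, 0 ≤ f A) :
    0 ≤ sampleExp E p f := by
  rw [← sampleExp_const E p 0]
  exact sampleExp_mono hp₀ hp₁ h

lemma sampleExp_insert {a : ι} (ha : a ∉ E) (p : ℝ) (f : Finset ι → ℝ) :
    sampleExp (insert a E) p f =
      p * sampleExp E p (fun A => f (insert a A)) + (1 - p) * sampleExp E p f := by
  rw [sampleExp, sum_powerset_insert ha, add_comm, card_insert_of_notMem ha, sampleExp, sampleExp,
    mul_sum, mul_sum]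
  congr 1 <;> refine sum_congr rfl fun A hA => ?_
  · rw [card_insert_of_notMem (notMem_mono (mem_powerset.1 hA) ha), Nat.add_sub_add_right]
    ring
  · rw [Nat.sub_add_comm (card_le_card (mem_powerset.1 hA))]
    ring

lemma sampleExp_union (h : Disjoint E Z) (p : ℝ) (f : Finset ι → ℝ) :
    sampleExp (E ∪ Z) p f = sampleExp E p (fun A => sampleExp Z p (fun B => f (A ∪ B))) := by
  induction E using Finset.induction_on generalizing f with
  | empty => simp [sampleExp]
  | insert a E ha ih =>
    rw [disjoint_insert_left] at h
    rw [insert_union, sampleExp_insert (by simp [ha, h.1]), sampleExp_insert ha, ih h.2, ih h.2]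
    simp only [insert_union]

lemma sampleExp_inter (hL : L ⊆ Z) (p : ℝ) (f : Finset ι → ℝ) :
    sampleExp Z p (fun B => f (B ∩ L)) = sampleExp L p f := by
  have hinter : ∀ A ⊆ Z \ L, ∀ B ⊆ L, (A ∪ B) ∩ L = B := fun A hA B hB => by
    rw [union_inter_distrib_right, disjoint_iff_inter_eq_empty.1 (disjoint_of_subset_left hA
      sdiff_disjoint), empty_union, inter_eq_left.2 hB]
  rw [← sdiff_union_of_subset hL, sampleExp_union sdiff_disjoint]
  calc sampleExp (Z \ L) p (fun A => sampleExp L p (fun B => f ((A ∪ B) ∩ L)))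
      = sampleExp (Z \ L) p (fun _ => sampleExp L p f) :=
        sampleExp_congr fun A hA => sampleExp_congr fun B hB => by rw [hinter A hA B hB]
    _ = sampleExp L p f := sampleExp_const ..

lemma sampleExp_le_of_resample (hp₀ : 0 ≤ p) (hp₁ : p ≤ 1) (hZ : Z ⊆ E)
    (h : ∀ A ⊆ E \ Z, ∀ B' ⊆ Z, f (A ∪ B') ≤ sampleExp Z p (fun B => g (A ∪ B))) :
    sampleExp E p f ≤ sampleExp E p g := by
  rw [← sdiff_union_of_subset hZ, sampleExp_union sdiff_disjoint, sampleExp_union sdiff_disjoint]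
  refine sampleExp_mono hp₀ hp₁ fun A hA => ?_
  rw [← sampleExp_const Z p (sampleExp Z p fun B => g (A ∪ B))]
  exact sampleExp_mono hp₀ hp₁ (h A hA)

lemma sampleExp_prod (E : Finset ι) (p : ℝ) (a : ι → ℝ) :
    sampleExp E p (fun A => ∏ i ∈ A, a i) = ∏ i ∈ E, (p * a i + (1 - p)) := by
  rw [prod_add]
  refine sum_congr rfl fun A hA => ?_
  rw [prod_mul_distrib, prod_const, prod_const, card_sdiff_of_subset (mem_powerset.1 hA)]
  ring

end Sampling

section Chernoff

variable {ι : Type*} [DecidableEq ι] {E Z L : Finset ι} {p δ : ℝ}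

lemma exp_neg_mul_le_one_sub_mul {y : ℝ} (hy₀ : 0 ≤ y) (hy₁ : y ≤ 1) (s : ℝ) :
    Real.exp (-s * y) ≤ 1 - (1 - Real.exp (-s)) * y := by
  have hconv := convexOn_exp.2 (Set.mem_univ 0) (Set.mem_univ (-s)) (sub_nonneg.2 hy₁) hy₀
    (sub_add_cancel 1 y)
  simp only [smul_eq_mul, mul_zero, zero_add, Real.exp_zero, mul_one] at hconv
  rw [mul_comm (-s)]
  linarith

lemma sampleExp_exp_neg_mul_sum_le (hp₀ : 0 ≤ p) (hp₁ : p ≤ 1) {x : ι → ℝ}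
    (hx : ∀ i ∈ E, x i ∈ Set.Icc 0 1) (s : ℝ) :
    sampleExp E p (fun A => Real.exp (-s * ∑ i ∈ A, x i)) ≤
      Real.exp (-(1 - Real.exp (-s)) * (p * ∑ i ∈ E, x i)) := by
  simp only [mul_sum, Real.exp_sum, sampleExp_prod]
  refine prod_le_prod (fun i _ => ?_) fun i hi => ?_
  · have : 0 ≤ 1 - p := sub_nonneg.2 hp₁
    positivity
  · have hle := mul_le_mul_of_nonneg_left
      (exp_neg_mul_le_one_sub_mul (hx i hi).1 (hx i hi).2 s) hp₀
    linarith [Real.add_one_le_exp (-(1 - Real.exp (-s)) * (p * x i))]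

lemma one_le_tau (hδ₀ : 0 < δ) (hδ₁ : δ ≤ 1) : 1 ≤ tau δ := by
  have hlog : 0 ≤ Real.log (1 / δ) := Real.log_nonneg (one_le_one_div hδ₀ hδ₁)
  rw [tau]
  linarith [Real.sqrt_nonneg (Real.log (1 / δ) ^ 2 + 2 * Real.log (1 / δ))]

-- `tau δ` is the larger root of `(t - 1) ^ 2 = 2 * t * log (1 / δ)`, and `log t ≤ sinh (log t)`.
lemma log_tau_sub_tau_add_one_le (hδ₀ : 0 < δ) (hδ₁ : δ ≤ 1) :
    Real.log (tau δ) - tau δ + 1 ≤ Real.log δ := by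
  have hτ := one_le_tau hδ₀ hδ₁
  have hpos : 0 < tau δ := by linarith
  have hroot : (tau δ - 1) ^ 2 = 2 * tau δ * Real.log (1 / δ) := by
    have hlog : 0 ≤ Real.log (1 / δ) := Real.log_nonneg (one_le_one_div hδ₀ hδ₁)
    have hsq := Real.sq_sqrt (by positivity : 0 ≤ Real.log (1 / δ) ^ 2 + 2 * Real.log (1 / δ))
    rw [tau]
    linear_combination hsq
  have hsinh := Real.self_le_sinh_iff.2 (Real.log_nonneg hτ)
  rw [Real.sinh_log hpos] at hsinh
  have hid : (tau δ - (tau δ)⁻¹) / 2 - tau δ + 1 = Real.log δ := by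
    rw [one_div, Real.log_inv] at hroot
    field_simp
    linear_combination -hroot
  linarith

theorem one_sub_le_sampleExp_one_le_sum (hp₀ : 0 < p) (hp₁ : p ≤ 1) (hδ₀ : 0 < δ) (hδ₁ : δ ≤ 1)
    {x : ι → ℝ} (hx : ∀ i ∈ E, x i ∈ Set.Icc 0 1) (hsum : tau δ / p ≤ ∑ i ∈ E, x i) :
    1 - δ ≤ sampleExp E p (fun A => if 1 ≤ ∑ i ∈ A, x i then 1 else 0) := by
  have hτ := one_le_tau hδ₀ hδ₁
  have hpos : 0 < tau δ := by linarith
  set s := Real.log (tau δ) with hs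
  have hs₀ : 0 ≤ s := Real.log_nonneg hτ
  have hmean : tau δ - 1 ≤ (1 - Real.exp (-s)) * (p * ∑ i ∈ E, x i) := by
    rw [div_le_iff₀' hp₀] at hsum
    rw [hs, Real.exp_neg, Real.exp_log hpos]
    calc tau δ - 1 = (1 - (tau δ)⁻¹) * tau δ := by field_simp
      _ ≤ _ := mul_le_mul_of_nonneg_left hsum (sub_nonneg.2 (inv_le_one_of_one_le₀ hτ))
  have htail : Real.exp s * sampleExp E p (fun A => Real.exp (-s * ∑ i ∈ A, x i)) ≤ δ :=
    calc _ ≤ Real.exp s * Real.exp (-(1 - Real.exp (-s)) * (p * ∑ i ∈ E, x i)) :=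
          mul_le_mul_of_nonneg_left (sampleExp_exp_neg_mul_sum_le hp₀.le hp₁ hx s)
            (Real.exp_pos s).le
      _ ≤ Real.exp (Real.log δ) := by
          rw [← Real.exp_add, Real.exp_le_exp]
          linarith [log_tau_sub_tau_add_one_le hδ₀ hδ₁]
      _ = δ := Real.exp_log hδ₀
  calc 1 - δ ≤ sampleExp E p (fun A => 1 - Real.exp s * Real.exp (-s * ∑ i ∈ A, x i)) := by
        rw [sampleExp_sub, sampleExp_const, sampleExp_mul_left]
        linarith
    _ ≤ _ := sampleExp_mono hp₀.le hp₁ fun A _ => by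
        rw [← Real.exp_add]
        split_ifs with h
        · linarith [Real.exp_pos (s + -s * ∑ i ∈ A, x i)]
        · have hexp : 0 ≤ s + -s * ∑ i ∈ A, x i := by nlinarith
          linarith [Real.one_le_exp hexp]

theorem one_sub_le_sampleExp_le_sum_inter (hp₀ : 0 < p) (hp₁ : p ≤ 1) (hδ₀ : 0 < δ) (hδ₁ : δ ≤ 1)
    (hL : L ⊆ Z) {w : ι → ℝ} {c : ℝ} (hc : 0 < c) (hw : ∀ i ∈ L, w i ∈ Set.Icc 0 c)
    (hsum : tau δ / p * c ≤ ∑ i ∈ L, w i) :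
    1 - δ ≤ sampleExp Z p (fun B => if c ≤ ∑ i ∈ B ∩ L, w i then 1 else 0) := by
  rw [sampleExp_inter hL p (fun B => if c ≤ ∑ i ∈ B, w i then 1 else 0)]
  have hscaled := one_sub_le_sampleExp_one_le_sum (E := L) hp₀ hp₁ hδ₀ hδ₁ (x := fun i => w i / c)
    (fun i hi => ⟨div_nonneg (hw i hi).1 hc.le, (div_le_one hc).2 (hw i hi).2⟩)
    (by rwa [← sum_div, le_div_iff₀ hc])
  simpa only [← sum_div, one_le_div hc] using hscaled

end Chernoff

section GreedyList

variable {ι Λ : Type*} {S S' Q Q' L : Finset ι} {key w : ι → ℝ} {θ c : ℝ}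

/-- The outcome of scanning the items of `S` by increasing `key` and collecting them into `L` until
the weight `θ` is reached, the items listed elsewhere being skipped. `Q` stands for the set of all
listed items, so that the last two conditions compare `L` with the items that were never listed. -/
structure IsGreedyList (S Q : Finset ι) (key w : ι → ℝ) (θ c : ℝ) (L : Finset ι) : Prop where
  subset : L ⊆ S
  weight_le : ∑ i ∈ L, w i ≤ θ + c
  le_weight : ∀ i ∈ S, i ∉ Q → θ ≤ ∑ i ∈ L, w i
  key_le : ∀ i ∈ S, i ∉ Q → ∀ i' ∈ L, key i' ≤ key i

lemma IsGreedyList.mono [DecidableEq ι] (h : IsGreedyList S Q key w θ c L) (hS : S ⊆ S')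
    (hQ : S' \ Q' ⊆ S \ Q) : IsGreedyList S' Q' key w θ c L where
  subset := h.subset.trans hS
  weight_le := h.weight_le
  le_weight i hi hiQ :=
    have hi' := mem_sdiff.1 (hQ (mem_sdiff.2 ⟨hi, hiQ⟩))
    h.le_weight i hi'.1 hi'.2
  key_le i hi hiQ :=
    have hi' := mem_sdiff.1 (hQ (mem_sdiff.2 ⟨hi, hiQ⟩))
    h.key_le i hi'.1 hi'.2

lemma exists_isGreedyList (S : Finset ι) (key : ι → ℝ) (hθc : 0 ≤ θ + c)
    (hw : ∀ i ∈ S, w i ≤ c) : ∃ L, IsGreedyList S L key w θ c L := by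
  classical
  induction S using Finset.induction_on_max_value key with
  | empty => exact ⟨∅, by simp, by simpa using hθc, by simp, by simp⟩
  | insert a S ha hmax ih =>
    obtain ⟨L, hL⟩ := ih fun i hi => hw i (mem_insert_of_mem hi)
    by_cases hfull : θ ≤ ∑ i ∈ L, w i
    · refine ⟨L, hL.subset.trans (subset_insert a S), hL.weight_le, fun _ _ _ => hfull, ?_⟩
      intro i hi hiL i' hi'
      rcases mem_insert.1 hi with rfl | hi
      · exact hmax i' (hL.subset hi')
      · exact hL.key_le i hi hiL i' hi'
    · have hSL : L = S := hL.subset.antisymm fun i hi => by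
        by_contra hiL
        exact hfull (hL.le_weight i hi hiL)
      subst hSL
      refine ⟨insert a L, Subset.rfl, ?_, fun i hi hi' => absurd hi hi',
        fun i hi hi' => absurd hi hi'⟩
      rw [sum_insert ha]
      linarith [hw a (mem_insert_self a L)]

theorem exists_pairwise_disjoint_isGreedyList [DecidableEq ι] [Fintype Λ] (S : Λ → Finset ι)
    (key w : Λ → ι → ℝ) (θ c : Λ → ℝ) (hθc : ∀ a, 0 ≤ θ a + c a)
    (hw : ∀ a, ∀ i ∈ S a, w a i ≤ c a) :
    ∃ L : Λ → Finset ι, Pairwise (Disjoint on L) ∧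
      ∀ a, IsGreedyList (S a) (univ.biUnion L) (key a) (w a) (θ a) (c a) (L a) := by
  classical
  suffices hfin : ∀ s : Finset Λ, ∃ L : Λ → Finset ι, (∀ a ∉ s, L a = ∅) ∧
      Pairwise (Disjoint on L) ∧
      ∀ a ∈ s, IsGreedyList (S a) (univ.biUnion L) (key a) (w a) (θ a) (c a) (L a) by
    obtain ⟨L, -, hdisj, hL⟩ := hfin univ
    exact ⟨L, hdisj, fun a => hL a (mem_univ a)⟩
  intro s
  induction s using Finset.induction_on with
  | empty => exact ⟨fun _ => ∅, by simp, fun _ _ _ => disjoint_empty_left _, by simp⟩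
  | insert a s ha ih =>
    obtain ⟨L, hempty, hdisj, hL⟩ := ih
    obtain ⟨N, hN⟩ := exists_isGreedyList (S a \ univ.biUnion L) (key a) (hθc a)
      fun i hi => hw a i (mem_sdiff.1 hi).1
    have hNL : ∀ b, Disjoint N (L b) := fun b => disjoint_of_subset_right
      (subset_biUnion_of_mem L (mem_univ b)) (disjoint_of_subset_left hN.subset sdiff_disjoint)
    have hunion : univ.biUnion (Function.update L a N) = univ.biUnion L ∪ N := by
      ext i
      simp only [mem_biUnion, mem_univ, true_and, mem_union]
      rw [Function.exists_update_iff L (p := fun _ X => i ∈ X)]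
      grind
    refine ⟨Function.update L a N, fun b hb => ?_, fun b b' hbb' => ?_, fun b hb => ?_⟩
    · rw [Function.update_of_ne (by grind), hempty b (by grind)]
    · have := hdisj hbb'
      have := hNL b'
      have := (hNL b).symm
      grind [Function.update_apply]
    · rw [hunion]
      rcases mem_insert.1 hb with rfl | hb
      · rw [Function.update_self]
        exact hN.mono sdiff_subset fun i => by grind
      · rw [Function.update_of_ne (by grind)]
        exact (hL b hb).mono Subset.rfl fun i => by grind

end GreedyList

section Exchange

variable {ι : Type*} {D N : Finset ι} {v w : ι → ℝ}

lemma sum_mul_sum_le_sum_mul_sum {κ : Type*} {D : Finset ι} {N : Finset κ} {b c : ι → ℝ}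
    {a d : κ → ℝ} (h : ∀ i ∈ D, ∀ k ∈ N, a k * b i ≤ c i * d k) :
    (∑ k ∈ N, a k) * ∑ i ∈ D, b i ≤ (∑ i ∈ D, c i) * ∑ k ∈ N, d k := by
  rw [sum_mul_sum, sum_mul_sum, sum_comm]
  exact sum_le_sum fun i hi => sum_le_sum fun k hk => h i hi k hk

lemma card_mul_sum_le_card_mul_sum {f g : ι → ℝ} (h : ∀ i ∈ D, ∀ i' ∈ N, f i' ≤ g i) :
    #D * ∑ i ∈ N, f i ≤ #N * ∑ i ∈ D, g i := by
  have := sum_mul_sum_le_sum_mul_sum (b := fun _ => 1) (d := fun _ => 1) (c := g) (a := f)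
    fun i hi i' hi' => by simpa using h i hi i' hi'
  simpa [mul_comm] using this

lemma card_le_card_of_sum_le_sum (hpos : 0 < ∑ i ∈ N, w i)
    (hle : ∑ i ∈ D, w i ≤ ∑ i ∈ N, w i) (hw : ∀ i ∈ D, ∀ i' ∈ N, w i' ≤ w i) : #D ≤ #N := by
  have hcard : (#D : ℝ) * ∑ i ∈ N, w i ≤ #N * ∑ i ∈ N, w i :=
    (card_mul_sum_le_card_mul_sum hw).trans (mul_le_mul_of_nonneg_left hle (Nat.cast_nonneg _))
  exact_mod_cast le_of_mul_le_mul_right hcard hpos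

theorem exists_subset_sum_le_mul_sum (hpos : 0 < ∑ i ∈ N, w i)
    (hle : ∑ i ∈ D, w i ≤ ∑ i ∈ N, w i) (hw : ∀ i ∈ D, ∀ i' ∈ N, w i' ≤ w i) {r : ℝ}
    (hv : ∀ i ∈ D, ∀ i' ∈ N, v i ≤ r * v i') :
    ∃ N' ⊆ N, ∑ i ∈ N', w i ≤ ∑ i ∈ D, w i ∧ ∑ i ∈ D, v i ≤ r * ∑ i ∈ N', v i := by
  obtain ⟨N', hN', hcard⟩ := exists_subset_card_eq (card_le_card_of_sum_le_sum hpos hle hw)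
  rcases D.eq_empty_or_nonempty with rfl | hD
  · exact ⟨∅, empty_subset N, by simp, by simp⟩
  have hD' : (0 : ℝ) < #D := by exact_mod_cast hD.card_pos
  refine ⟨N', hN', le_of_mul_le_mul_left ?_ hD', le_of_mul_le_mul_left ?_ hD'⟩
  · have := card_mul_sum_le_card_mul_sum fun i hi i' hi' => hw i hi i' (hN' hi')
    rwa [hcard] at this
  · have := card_mul_sum_le_card_mul_sum fun i' hi' i hi => hv i hi i' (hN' hi')
    rwa [hcard, ← mul_sum] at this

lemma exists_maximal_subset_sum_le [DecidableEq ι] (S : Finset ι) (w : ι → ℝ) {W : ℝ}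
    (hW : 0 ≤ W) :
    ∃ N ⊆ S, ∑ i ∈ N, w i ≤ W ∧ (N = S ∨ ∃ x ∈ S, x ∉ N ∧ W < ∑ i ∈ insert x N, w i) := by
  induction S using Finset.induction_on with
  | empty => exact ⟨∅, Subset.rfl, by simpa using hW, Or.inl rfl⟩
  | insert a S ha ih =>
    obtain ⟨N, hNS, hNW, rfl | ⟨x, hx, hxN, hxW⟩⟩ := ih
    · rcases le_or_gt (∑ i ∈ insert a N, w i) W with hfit | hover
      · exact ⟨insert a N, Subset.rfl, hfit, Or.inl rfl⟩
      · exact ⟨N, subset_insert a N, hNW, Or.inr ⟨a, mem_insert_self a N, ha, hover⟩⟩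
    · exact ⟨N, hNS.trans (subset_insert a S), hNW, Or.inr ⟨x, mem_insert_of_mem hx, hxN, hxW⟩⟩

lemma sum_le_sum_of_density_le (hpos : 0 < ∑ i ∈ N, w i) (hle : ∑ i ∈ D, w i ≤ ∑ i ∈ N, w i)
    (hv : ∀ i ∈ N, 0 ≤ v i) (hdens : ∀ i ∈ D, ∀ i' ∈ N, w i' * v i ≤ w i * v i') :
    ∑ i ∈ D, v i ≤ ∑ i ∈ N, v i :=
  le_of_mul_le_mul_left ((sum_mul_sum_le_sum_mul_sum hdens).trans
    (mul_le_mul_of_nonneg_right hle (sum_nonneg hv))) hpos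

theorem exists_subset_sum_sub_le_sum (hpos : 0 < ∑ i ∈ N, w i)
    (hle : ∑ i ∈ D, w i ≤ ∑ i ∈ N, w i) (hw : ∀ i ∈ D, 0 ≤ w i) {s : ℝ} (hs : 0 ≤ s)
    (hv : ∀ i ∈ N, v i ∈ Set.Icc 0 s) (hdens : ∀ i ∈ D, ∀ i' ∈ N, w i' * v i ≤ w i * v i') :
    ∃ N' ⊆ N, ∑ i ∈ N', w i ≤ ∑ i ∈ D, w i ∧ ∑ i ∈ D, v i - s ≤ ∑ i ∈ N', v i := by
  classical
  have hvalue : ∀ N' ⊆ N, 0 < ∑ i ∈ N', w i → ∑ i ∈ D, w i ≤ ∑ i ∈ N', w i →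
      ∑ i ∈ D, v i ≤ ∑ i ∈ N', v i := fun N' hN' hpos' hle' =>
    sum_le_sum_of_density_le hpos' hle' (fun i hi => (hv i (hN' hi)).1)
      fun i hi i' hi' => hdens i hi i' (hN' hi')
  have hD : 0 ≤ ∑ i ∈ D, w i := sum_nonneg hw
  obtain ⟨N', hN', hfit, rfl | ⟨x, hx, hxN', hover⟩⟩ := exists_maximal_subset_sum_le N w hD
  · exact ⟨N', hN', hfit, by linarith [hvalue N' hN' hpos hle]⟩
  · have hgain := hvalue _ (insert_subset hx hN') (hD.trans_lt hover) hover.le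
    rw [sum_insert hxN'] at hgain
    exact ⟨N', hN', hfit, by linarith [(hv x hx).2]⟩

end Exchange

section ValueClass

variable {δ a x y : ℝ} {K : ℕ}

/-- The index of the geometric value class of `x`: class `0` is `x ≤ a`, class `k` with `0 < k < K`
is `a * (1 + δ) ^ (k - 1) < x ≤ a * (1 + δ) ^ k`, and class `K` collects all larger values. -/
noncomputable def valueClass (δ a : ℝ) (K : ℕ) (x : ℝ) : Fin (K + 1) :=
  ⟨min ⌈Real.logb (1 + δ) (x / a)⌉₊ K, by omega⟩

lemma natCeil_logb_le_iff {b z : ℝ} (hb : 1 < b) (hz : 0 < z) {n : ℕ} :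
    ⌈Real.logb b z⌉₊ ≤ n ↔ z ≤ b ^ n := by
  rw [Nat.ceil_le, Real.logb_le_iff_le_rpow hb hz, Real.rpow_natCast]

lemma le_of_valueClass_eq_zero (hδ : 0 < δ) (ha : 0 < a) (hx : 0 < x) (hK : K ≠ 0)
    (h : valueClass δ a K x = 0) : x ≤ a := by
  have hceil : ⌈Real.logb (1 + δ) (x / a)⌉₊ ≤ 0 := by
    have := congrArg Fin.val h
    simp only [valueClass, Fin.coe_ofNat_eq_mod, Nat.zero_mod] at this
    omega
  rwa [natCeil_logb_le_iff (by linarith) (by positivity), pow_zero, div_le_one ha] at hceil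

lemma mul_pow_lt_of_valueClass_eq_last (hδ : 0 < δ) (ha : 0 < a) (hx : 0 < x) (hK : K ≠ 0)
    (h : valueClass δ a K x = Fin.last K) : a * (1 + δ) ^ K < (1 + δ) * x := by
  have hceil : ¬ ⌈Real.logb (1 + δ) (x / a)⌉₊ ≤ K - 1 := by
    have := congrArg Fin.val h
    simp only [valueClass, Fin.val_last] at this
    omega
  rw [natCeil_logb_le_iff (by linarith) (by positivity), not_le, lt_div_iff₀' ha] at hceil
  rw [← mul_pow_sub_one hK, mul_left_comm]
  exact mul_lt_mul_of_pos_left hceil (by linarith)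

lemma le_mul_of_valueClass_eq (hδ : 0 < δ) (ha : 0 < a) (hx : 0 < x) (hy : 0 < y)
    (h : valueClass δ a K x = valueClass δ a K y) (h₀ : valueClass δ a K x ≠ 0)
    (hlast : valueClass δ a K x ≠ Fin.last K) : x ≤ (1 + δ) * y := by
  have hb : 1 < 1 + δ := by linarith
  simp only [valueClass, ne_eq, Fin.ext_iff, Fin.val_last, Fin.coe_ofNat_eq_mod,
    Nat.zero_mod] at h h₀ hlast
  set n := ⌈Real.logb (1 + δ) (x / a)⌉₊
  have hxn : x / a ≤ (1 + δ) ^ n := (natCeil_logb_le_iff hb (by positivity)).1 le_rfl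
  have hyn : ¬ ⌈Real.logb (1 + δ) (y / a)⌉₊ ≤ n - 1 := by omega
  rw [natCeil_logb_le_iff hb (by positivity), not_le, lt_div_iff₀' ha] at hyn
  rw [div_le_iff₀' ha, ← mul_pow_sub_one (by omega : n ≠ 0), mul_left_comm] at hxn
  exact hxn.trans (mul_le_mul_of_nonneg_left hyn.le (by linarith))

end ValueClass

section ClassItems

variable {ι : Type*} {E Q L D : Finset ι} {v w : ι → ℝ} {c δ a θ : ℝ} {K : ℕ}
  {k : Fin (K + 1)}

/-- The items of positive value that fit into a knapsack of capacity `c` and whose value lies in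
class `k`. -/
noncomputable def classItems (E : Finset ι) (v w : ι → ℝ) (c δ a : ℝ) (K : ℕ)
    (k : Fin (K + 1)) : Finset ι :=
  {i ∈ E | w i ≤ c ∧ 0 < v i ∧ valueClass δ a K (v i) = k}

/-- The order in which class `k` is listed: by inverse density in class `0`, where values may
differ arbitrarily, and by weight in the other classes. -/
noncomputable def classKey (v w : ι → ℝ) (k : Fin (K + 1)) (i : ι) : ℝ :=
  if k = 0 then w i / v i else w i

lemma exists_exchange_classItems_zero (hδ : 0 < δ) (ha : 0 < a) (hK : K ≠ 0) (hc : 0 < c)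
    (hw : ∀ i, 0 ≤ w i) (hL : IsGreedyList (classItems E v w c δ a K 0) Q
      (classKey v w (0 : Fin (K + 1))) w θ c L)
    (hD : D ⊆ classItems E v w c δ a K 0) (hDQ : Disjoint D Q) (hDc : ∑ i ∈ D, w i ≤ c) :
    ∀ N ⊆ L, c ≤ ∑ i ∈ N, w i →
      ∃ N' ⊆ N, ∑ i ∈ N', w i ≤ ∑ i ∈ D, w i ∧ ∑ i ∈ D, v i - a ≤ ∑ i ∈ N', v i := by
  intro N hNL hN
  have hclass : ∀ {i}, i ∈ classItems E v w c δ a K 0 → 0 < v i ∧ v i ≤ a := fun hi => by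
    obtain ⟨-, -, hpos, hi⟩ := mem_filter.1 hi
    exact ⟨hpos, le_of_valueClass_eq_zero hδ ha hpos hK hi⟩
  refine exists_subset_sum_sub_le_sum (hc.trans_le hN) (hDc.trans hN) (fun i _ => hw i) ha.le
    (fun i hi => (hclass (hL.subset (hNL hi))).imp_left le_of_lt) fun i hi i' hi' => ?_
  have hkey := hL.key_le i (hD hi) (disjoint_left.1 hDQ hi) i' (hNL hi')
  simp only [classKey, if_true] at hkey
  exact (div_le_div_iff₀ (hclass (hL.subset (hNL hi'))).1 (hclass (hD hi)).1).1 hkey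

lemma exists_exchange_classItems_mid (hδ : 0 < δ) (ha : 0 < a) (hc : 0 < c) (h₀ : k ≠ 0)
    (hlast : k ≠ Fin.last K)
    (hL : IsGreedyList (classItems E v w c δ a K k) Q (classKey v w k) w θ c L)
    (hD : D ⊆ classItems E v w c δ a K k) (hDQ : Disjoint D Q) (hDc : ∑ i ∈ D, w i ≤ c) :
    ∀ N ⊆ L, c ≤ ∑ i ∈ N, w i →
      ∃ N' ⊆ N, ∑ i ∈ N', w i ≤ ∑ i ∈ D, w i ∧ ∑ i ∈ D, v i ≤ (1 + δ) * ∑ i ∈ N', v i := by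
  intro N hNL hN
  refine exists_subset_sum_le_mul_sum (hc.trans_le hN) (hDc.trans hN) (fun i hi i' hi' => ?_)
    fun i hi i' hi' => ?_
  · have hkey := hL.key_le i (hD hi) (disjoint_left.1 hDQ hi) i' (hNL hi')
    simpa only [classKey, if_neg h₀] using hkey
  · obtain ⟨-, -, hpos, rfl⟩ := mem_filter.1 (hD hi)
    obtain ⟨-, -, hpos', hclass⟩ := mem_filter.1 (hL.subset (hNL hi'))
    exact le_mul_of_valueClass_eq hδ ha hpos hpos' hclass.symm h₀ hlast

lemma exists_exchange_classItems (hδ : 0 < δ) (hδ₁ : δ ≤ 1) (ha : 0 < a) (hK : K ≠ 0) (hc : 0 < c)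
    (hw : ∀ i, 0 ≤ w i) (hlast : k ≠ Fin.last K)
    (hL : IsGreedyList (classItems E v w c δ a K k) Q (classKey v w k) w θ c L)
    (hD : D ⊆ classItems E v w c δ a K k) (hDQ : Disjoint D Q) (hDc : ∑ i ∈ D, w i ≤ c) :
    ∀ N ⊆ L, c ≤ ∑ i ∈ N, w i →
      ∃ N' ⊆ N, ∑ i ∈ N', w i ≤ ∑ i ∈ D, w i ∧
        (1 - δ) * ∑ i ∈ D, v i - (if k = 0 then a else 0) ≤ ∑ i ∈ N', v i := by
  intro N hNL hN
  have hpos : ∀ {i}, i ∈ classItems E v w c δ a K k → 0 ≤ v i :=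
    fun hi => (mem_filter.1 hi).2.2.1.le
  rcases eq_or_ne k 0 with rfl | h₀
  · obtain ⟨N', hN', hweight, hvalue⟩ :=
      exists_exchange_classItems_zero hδ ha hK hc hw hL hD hDQ hDc N hNL hN
    refine ⟨N', hN', hweight, ?_⟩
    have := mul_nonneg hδ.le (sum_nonneg fun i hi => hpos (hD hi))
    rw [if_pos rfl]
    linarith
  · obtain ⟨N', hN', hweight, hvalue⟩ :=
      exists_exchange_classItems_mid hδ ha hc h₀ hlast hL hD hDQ hDc N hNL hN
    refine ⟨N', hN', hweight, ?_⟩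
    have hN'₀ : 0 ≤ ∑ i ∈ N', v i := sum_nonneg fun i hi => hpos (hL.subset (hNL (hN' hi)))
    rw [if_neg h₀, sub_zero]
    nlinarith [mul_le_mul_of_nonneg_left hvalue (sub_nonneg.2 hδ₁),
      mul_nonneg (sq_nonneg δ) hN'₀]

lemma sum_eq_sum_inter_add_sum_classItems [DecidableEq ι] {X : Finset ι} (hX : X ⊆ E)
    (hXc : ∀ i ∈ X, w i ≤ c) (hv : ∀ i, 0 ≤ v i) :
    ∑ i ∈ X, v i =
      ∑ i ∈ X ∩ Q, v i + ∑ k, ∑ i ∈ (X \ Q) ∩ classItems E v w c δ a K k, v i := by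
  have hpiece : ∀ k, (X \ Q) ∩ classItems E v w c δ a K k =
      {i ∈ {i ∈ X \ Q | 0 < v i} | valueClass δ a K (v i) = k} := fun k => by
    ext i
    simp only [classItems, mem_inter, mem_filter]
    exact ⟨fun h => ⟨⟨h.1, h.2.2.2.1⟩, h.2.2.2.2⟩, fun h => ⟨h.1.1, hX (mem_sdiff.1 h.1.1).1,
      hXc i (mem_sdiff.1 h.1.1).1, h.1.2, h.2⟩⟩
  simp only [hpiece]
  rw [sum_fiberwise, sum_filter_of_ne fun i _ h => (hv i).lt_of_ne' h, sum_inter_add_sum_sdiff]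

lemma sum_inter_add_sum_classItems_le [DecidableEq ι] {X : Finset ι} (hw : ∀ i, 0 ≤ w i) :
    ∑ i ∈ X ∩ Q, w i + ∑ k, ∑ i ∈ (X \ Q) ∩ classItems E v w c δ a K k, w i ≤ ∑ i ∈ X, w i := by
  rw [← sum_inter_add_sum_sdiff X Q w, ← sum_biUnion fun k _ k' _ hkk' => ?_]
  · gcongr
    · exact fun i _ _ => hw i
    · exact biUnion_subset.2 fun k _ => inter_subset_left
  · refine disjoint_left.2 fun i hi hi' => hkk' ?_
    rw [← (mem_filter.1 (mem_inter.1 hi).2).2.2.2, (mem_filter.1 (mem_inter.1 hi').2).2.2.2]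

end ClassItems

section Recourse

variable {ι κ : Type*} [DecidableEq ι] {E F Q Z L D : Finset ι} {v w : ι → ℝ}
  {p c δ ε a θ V W y : ℝ} {K : ℕ} {k : Fin (K + 1)}

/-- Expected value `y` can be secured in a knapsack within weight `W`, where the items of `F` are at
hand and those of `L` only if they are active: once the `p`-sample `B` of `Z` is revealed, the
knapsack is filled with `N B ⊆ F ∪ (B ∩ L)`. -/
def HasRecourse (Z : Finset ι) (p : ℝ) (v w : ι → ℝ) (F L : Finset ι) (W y : ℝ) : Prop :=
  ∃ N : Finset ι → Finset ι, (∀ B, N B ⊆ F ∪ (B ∩ L)) ∧ (∀ B, ∑ i ∈ N B, w i ≤ W) ∧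
    y ≤ sampleExp Z p fun B => ∑ i ∈ N B, v i

lemma HasRecourse.mono {F' L' : Finset ι} {W' y' : ℝ} (h : HasRecourse Z p v w F L W y)
    (hF : F ⊆ F') (hL : L ⊆ L') (hW : W ≤ W') (hy : y' ≤ y) :
    HasRecourse Z p v w F' L' W' y' := by
  obtain ⟨N, hN, hweight, hvalue⟩ := h
  exact ⟨N, fun B => (hN B).trans (by gcongr), fun B => (hweight B).trans hW, hy.trans hvalue⟩

lemma hasRecourse_of_nonpos (hW : 0 ≤ W) (hy : y ≤ 0) : HasRecourse Z p v w F L W y :=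
  ⟨fun _ => ∅, fun _ => empty_subset _, fun _ => by simpa using hW,
    by simpa [sampleExp_const] using hy⟩

theorem hasRecourse_of_exchange (hp₀ : 0 < p) (hp₁ : p ≤ 1) (hδ₀ : 0 < δ) (hδ₁ : δ ≤ 1)
    (hL : L ⊆ Z) (hc : 0 < c) (hw : ∀ i ∈ L, w i ∈ Set.Icc 0 c)
    (hheavy : tau δ / p * c ≤ ∑ i ∈ L, w i) (hW : 0 ≤ W)
    (hexch : ∀ N ⊆ L, c ≤ ∑ i ∈ N, w i → ∃ N' ⊆ N, ∑ i ∈ N', w i ≤ W ∧ y ≤ ∑ i ∈ N', v i) :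
    HasRecourse Z p v w ∅ L W ((1 - δ) * y) := by
  rcases le_total y 0 with hy | hy
  · exact hasRecourse_of_nonpos hW (mul_nonpos_of_nonneg_of_nonpos (sub_nonneg.2 hδ₁) hy)
  have hrule : ∀ B, ∃ N ⊆ B ∩ L, ∑ i ∈ N, w i ≤ W ∧
      y * (if c ≤ ∑ i ∈ B ∩ L, w i then 1 else 0) ≤ ∑ i ∈ N, v i := fun B => by
    split_ifs with hfull
    · simpa only [mul_one] using hexch (B ∩ L) inter_subset_right hfull
    · exact ⟨∅, empty_subset _, by simpa using hW, by simp⟩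
  choose N hN hweight hvalue using hrule
  refine ⟨N, fun B => (hN B).trans subset_union_right, hweight, ?_⟩
  calc (1 - δ) * y
      ≤ y * sampleExp Z p (fun B => if c ≤ ∑ i ∈ B ∩ L, w i then 1 else 0) := by
        rw [mul_comm]
        exact mul_le_mul_of_nonneg_left
          (one_sub_le_sampleExp_le_sum_inter hp₀ hp₁ hδ₀ hδ₁ hL hc hw hheavy) hy
    _ ≤ sampleExp Z p fun B => ∑ i ∈ N B, v i := by
        rw [← sampleExp_mul_left]
        exact sampleExp_mono hp₀.le hp₁ fun B _ => hvalue B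

theorem hasRecourse_of_forall_le (hp₀ : 0 < p) (hp₁ : p ≤ 1) (hδ₀ : 0 < δ) (hδ₁ : δ < 1)
    (hL : L ⊆ Z) (hc : 0 < c) (hw : ∀ i ∈ L, w i ∈ Set.Icc 0 c)
    (hheavy : tau δ / p * c ≤ ∑ i ∈ L, w i) (hv : ∀ i ∈ L, V ≤ (1 - δ) * v i) :
    HasRecourse Z p v w ∅ L c V := by
  have hδ : 0 < 1 - δ := sub_pos.2 hδ₁
  rw [← mul_div_cancel₀ V hδ.ne']
  refine hasRecourse_of_exchange hp₀ hp₁ hδ₀ hδ₁.le hL hc hw hheavy hc.le fun N hN hfull => ?_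
  obtain ⟨i, hi⟩ := nonempty_of_sum_ne_zero (hc.trans_le hfull).ne'
  refine ⟨{i}, singleton_subset_iff.2 hi, ?_, ?_⟩
  · simpa using (hw i (hN hi)).2
  · rw [sum_singleton, div_le_iff₀' hδ]
    exact hv i (hN hi)

theorem hasRecourse_classItems (hp₀ : 0 < p) (hp₁ : p ≤ 1) (hδ₀ : 0 < δ) (hδ₁ : δ ≤ 1)
    (ha : 0 < a) (hK : K ≠ 0) (hc : 0 < c) (hw : ∀ i, 0 ≤ w i) (hLZ : L ⊆ Z)
    (hL : IsGreedyList (classItems E v w c δ a K k) Q (classKey v w k) w (tau δ / p * c) c L)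
    (hlast : k = Fin.last K → ∑ i ∈ L, w i < tau δ / p * c)
    (hD : D ⊆ classItems E v w c δ a K k) (hDQ : Disjoint D Q) (hDc : ∑ i ∈ D, w i ≤ c) :
    HasRecourse Z p v w ∅ L (∑ i ∈ D, w i)
      ((1 - 2 * δ) * ∑ i ∈ D, v i - if k = 0 then a else 0) := by
  have hloss : (0 : ℝ) ≤ if k = 0 then a else 0 := by split_ifs <;> linarith
  have hweight : 0 ≤ ∑ i ∈ D, w i := sum_nonneg fun i _ => hw i
  rcases D.eq_empty_or_nonempty with rfl | ⟨i, hi⟩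
  · exact hasRecourse_of_nonpos hweight (by simpa using hloss)
  have hheavy := hL.le_weight i (hD hi) (disjoint_left.1 hDQ hi)
  have hvalue : 0 ≤ ∑ i ∈ D, v i := sum_nonneg fun i hi => (mem_filter.1 (hD hi)).2.2.1.le
  refine (hasRecourse_of_exchange hp₀ hp₁ hδ₀ hδ₁ hLZ hc
    (fun i hi => ⟨hw i, (mem_filter.1 (hL.subset hi)).2.1⟩) hheavy hweight
    (exists_exchange_classItems hδ₀ hδ₁ ha hK hc hw (fun h => (hlast h).not_ge hheavy) hL hD hDQ
      hDc)).mono Subset.rfl Subset.rfl le_rfl ?_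
  nlinarith [mul_nonneg (sq_nonneg δ) hvalue, mul_nonneg hδ₀.le hloss]

theorem HasRecourse.sum [Fintype κ] {L : κ → Finset ι} {W y : κ → ℝ} (hL : Pairwise (Disjoint on L))
    (hF : Disjoint F (univ.biUnion L)) (h : ∀ k, HasRecourse Z p v w ∅ (L k) (W k) (y k)) :
    HasRecourse Z p v w F (univ.biUnion L) (∑ i ∈ F, w i + ∑ k, W k)
      (∑ i ∈ F, v i + ∑ k, y k) := by
  choose N hN hweight hvalue using h
  have hNL : ∀ k B, N k B ⊆ B ∩ L k := fun k B => (hN k B).trans (empty_union _).subset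
  have hsum : ∀ (u : ι → ℝ) B, ∑ i ∈ F ∪ univ.biUnion (N · B), u i =
      ∑ i ∈ F, u i + ∑ k, ∑ i ∈ N k B, u i := fun u B => by
    rw [sum_union, sum_biUnion fun k _ k' _ hkk' => ?_]
    · exact disjoint_of_subset_left ((hNL k B).trans inter_subset_right)
        (disjoint_of_subset_right ((hNL k' B).trans inter_subset_right) (hL hkk'))
    · exact disjoint_of_subset_right
        (biUnion_mono fun k _ => (hNL k B).trans inter_subset_right) hF
  refine ⟨fun B => F ∪ univ.biUnion (N · B), fun B => ?_, fun B => ?_, ?_⟩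
  · refine union_subset_union_right (biUnion_subset.2 fun k _ => (hNL k B).trans ?_)
    exact inter_subset_inter_left (subset_biUnion_of_mem L (mem_univ k))
  · rw [hsum]
    gcongr with k
    exact hweight k B
  · simp only [hsum, sampleExp_add, sampleExp_const, sampleExp_sum]
    gcongr with k
    exact hvalue k

theorem hasRecourse_of_not_heavy_last (hp₀ : 0 < p) (hp₁ : p ≤ 1) (hδ₀ : 0 < δ) (hδ₁ : δ ≤ 1)
    (ha : 0 < a) (hK : K ≠ 0) (hc : 0 < c) (hv : ∀ i, 0 ≤ v i) (hw : ∀ i, 0 ≤ w i)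
    {L : Fin (K + 1) → Finset ι} (hdisj : Pairwise (Disjoint on L)) (hLZ : ∀ k, L k ⊆ Z)
    (hL : ∀ k, IsGreedyList (classItems E v w c δ a K k) Q (classKey v w k) w
      (tau δ / p * c) c (L k))
    (hlast : ∑ i ∈ L (Fin.last K), w i < tau δ / p * c) {X : Finset ι} (hX : X ⊆ E)
    (hXL : Disjoint X (univ.biUnion L)) (hXc : ∑ i ∈ X, w i ≤ c) :
    HasRecourse Z p v w (X ∩ Q) (univ.biUnion L) c ((1 - 2 * δ) * ∑ i ∈ X, v i - a) := by
  set D : Fin (K + 1) → Finset ι := fun k => (X \ Q) ∩ classItems E v w c δ a K k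
  have hDX : ∀ k, D k ⊆ X := fun k => inter_subset_left.trans sdiff_subset
  have hDc : ∀ k, ∑ i ∈ D k, w i ≤ c := fun k =>
    (sum_le_sum_of_subset_of_nonneg (hDX k) fun i _ _ => hw i).trans hXc
  have hclass : ∀ k, HasRecourse Z p v w ∅ (L k) (∑ i ∈ D k, w i)
      ((1 - 2 * δ) * ∑ i ∈ D k, v i - if k = 0 then a else 0) := fun k =>
    hasRecourse_classItems hp₀ hp₁ hδ₀ hδ₁ ha hK hc hw (hLZ k) (hL k)
      (fun hk => hk ▸ hlast) inter_subset_right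
      (disjoint_of_subset_left inter_subset_left sdiff_disjoint) (hDc k)
  have hkept : 0 ≤ ∑ i ∈ X ∩ Q, v i := sum_nonneg fun i _ => hv i
  refine (HasRecourse.sum hdisj (disjoint_of_subset_left inter_subset_left hXL) hclass).mono
    Subset.rfl Subset.rfl ((sum_inter_add_sum_classItems_le hw).trans hXc) ?_
  rw [sum_eq_sum_inter_add_sum_classItems (Q := Q) (c := c) (δ := δ) (a := a) (K := K) hX
    (fun i hi => (single_le_sum (fun i _ => hw i) hi).trans hXc) hv, sum_sub_distrib, ← mul_sum,
    sum_ite_eq' univ, if_pos (mem_univ _)]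
  nlinarith

/-- If the list of the top class is heavy, one of its items is active with high probability and
worth as much as the whole knapsack; otherwise all items of that class are queried. -/
theorem exists_affine_hasRecourse (hp₀ : 0 < p) (hp₁ : p ≤ 1) (hε : ε ∈ Set.Ioo (0 : ℝ) (1 / 3))
    (hK : 1 / ε ^ 3 ≤ (1 + ε ^ 2) ^ K) (hV : 0 ≤ V) (hc : 0 < c) (hv : ∀ i, 0 ≤ v i)
    (hw : ∀ i, 0 ≤ w i) {L : Fin (K + 1) → Finset ι} (hdisj : Pairwise (Disjoint on L))
    (hLZ : ∀ k, L k ⊆ Z)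
    (hL : ∀ k, IsGreedyList (classItems E v w c (ε ^ 2) (ε * V) K k) Q (classKey v w k) w
      (tau (ε ^ 2) / p * c) c (L k)) :
    ∃ α β : ℝ, (∀ r, 0 ≤ r → r ≤ V → (1 - 2 * ε ^ 2) * r - ε * V ≤ α * r + β) ∧
      ∀ X ⊆ E, Disjoint X (univ.biUnion L) → ∑ i ∈ X, w i ≤ c →
        HasRecourse Z p v w (X ∩ Q) (univ.biUnion L) c (α * ∑ i ∈ X, v i + β) := by
  obtain ⟨hε₀, hε₁⟩ := hε
  have hδ₀ : 0 < ε ^ 2 := by positivity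
  have hδ₁ : ε ^ 2 < 1 / 9 := by nlinarith
  have hK₀ : K ≠ 0 := by
    rintro rfl
    have : 1 < 1 / ε ^ 3 :=
      one_lt_one_div (by positivity) (pow_lt_one₀ hε₀.le (by linarith) (by simp))
    linarith [hK.trans_eq (pow_zero _)]
  rcases hV.eq_or_lt with rfl | hV
  · refine ⟨0, 0, fun r hr₀ hr₁ => by simp [hr₁.antisymm hr₀], fun X _ _ _ => ?_⟩
    exact hasRecourse_of_nonpos hc.le (by simp)
  have ha : 0 < ε * V := mul_pos hε₀ hV
  rcases le_or_gt (tau (ε ^ 2) / p * c) (∑ i ∈ L (Fin.last K), w i) with hheavy | hlight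
  · refine ⟨0, V, fun r hr₀ hr₁ => by nlinarith, fun X _ _ _ => ?_⟩
    have htop : ∀ i ∈ L (Fin.last K), V ≤ (1 - ε ^ 2) * v i := fun i hi => by
      obtain ⟨-, -, hpos, hi⟩ := mem_filter.1 ((hL _).subset hi)
      have hlarge := mul_pow_lt_of_valueClass_eq_last hδ₀ ha hpos hK₀ hi
      calc V = ε ^ 2 * (ε * V * (1 / ε ^ 3)) := by field_simp
        _ ≤ ε ^ 2 * (ε * V * (1 + ε ^ 2) ^ K) := by gcongr
        _ ≤ ε ^ 2 * ((1 + ε ^ 2) * v i) := by gcongr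
        _ ≤ (1 - ε ^ 2) * v i := by nlinarith [mul_pos hδ₀ hpos]
    exact (hasRecourse_of_forall_le hp₀ hp₁ hδ₀ (by linarith) (hLZ _) hc
      (fun i hi => ⟨hw i, (mem_filter.1 ((hL _).subset hi)).2.1⟩) hheavy htop).mono
      (empty_subset _) (subset_biUnion_of_mem L (mem_univ _)) le_rfl (by simp)
  · exact ⟨1 - 2 * ε ^ 2, -(ε * V), fun r _ _ => le_rfl, fun X hX hXL hXc =>
      hasRecourse_of_not_heavy_last hp₀ hp₁ hδ₀ (by linarith) ha hK₀ hc hv hw hdisj hLZ hL hlight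
        hX hXL hXc⟩

end Recourse

section Assignment

variable {ι κ : Type*} {m : ℕ}

lemma assignValue_eq_sum_filter (E : Finset ι) (v : ι → Fin m → ℝ) (σ : ι → Option (Fin m)) :
    assignValue E v σ = ∑ j, ∑ i ∈ E with σ i = some j, v i j := by
  simp only [assignValue, sum_filter]
  rw [sum_comm]
  refine sum_congr rfl fun i _ => ?_
  cases σ i <;> simp

lemma finite_setOf_assignValue (E : Finset ι) (v : ι → Fin m → ℝ)
    (P : (ι → Option (Fin m)) → Prop) : {x : ℝ | ∃ σ, P σ ∧ x = assignValue E v σ}.Finite := by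
  refine (Set.finite_range fun σ : E → Option (Fin m) => ∑ i : E, (σ i).elim 0 (v i)).subset ?_
  rintro _ ⟨σ, -, rfl⟩
  exact ⟨fun i => σ i, sum_coe_sort E fun i => (σ i).elim 0 (v i)⟩

lemma exists_forall_eq_some_iff_mem {X : κ → Finset ι} (hX : Pairwise (Disjoint on X)) :
    ∃ σ : ι → Option κ, ∀ i j, σ i = some j ↔ i ∈ X j := by
  suffices h : ∀ i, ∃ o : Option κ, ∀ j, o = some j ↔ i ∈ X j from Classical.skolem.1 h
  intro i
  by_cases hi : ∃ j, i ∈ X j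
  · obtain ⟨j, hj⟩ := hi
    refine ⟨some j, fun j' => ⟨?_, fun hj' => ?_⟩⟩
    · rintro ⟨⟩
      exact hj
    · by_contra hne
      exact disjoint_left.1 (hX fun h => hne (congrArg some h)) hj hj'
  · exact ⟨none, fun j => iff_of_false (by simp) fun hj => hi ⟨j, hj⟩⟩

end Assignment

section Packing

variable {ι : Type*} [DecidableEq ι] {m : ℕ} {E A : Finset ι} {C : Fin m → ℝ}
  {v w : ι → Fin m → ℝ} {X : Fin m → Finset ι}

/-- A feasible assignment on a subset of `A`, given by the disjoint contents `X j` of the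
knapsacks. -/
structure IsPacking (C : Fin m → ℝ) (w : ι → Fin m → ℝ) (A : Finset ι)
    (X : Fin m → Finset ι) : Prop where
  subset : ∀ j, X j ⊆ A
  disjoint : Pairwise (Disjoint on X)
  weight_le : ∀ j, ∑ i ∈ X j, w i j ≤ C j

/-- The indicator vectors of the feasible subsets of `E`. -/
def feasibleIndicators (E : Finset ι) (C : Fin m → ℝ) (w : ι → Fin m → ℝ) : Set (ι → ℝ) :=
  {x : ι → ℝ | ∃ S : Finset ι, S ⊆ E ∧
    (∃ σ : ι → Option (Fin m), (∀ i, σ i ≠ none ↔ i ∈ S) ∧ (∀ j, knapWeight E w σ j ≤ C j)) ∧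
    x = fun i => if i ∈ S then (1 : ℝ) else 0}

lemma IsPacking.exists_assignment (hX : IsPacking C w A X) (hA : A ⊆ E) :
    ∃ σ : ι → Option (Fin m), (∀ i, σ i ≠ none ↔ i ∈ univ.biUnion X) ∧
      (∀ j, knapWeight E w σ j ≤ C j) ∧ assignValue E v σ = ∑ j, ∑ i ∈ X j, v i j := by
  obtain ⟨σ, hσ⟩ := exists_forall_eq_some_iff_mem hX.disjoint
  have hfilter : ∀ j, {i ∈ E | σ i = some j} = X j := fun j => by
    ext i
    rw [mem_filter, hσ, and_iff_right_of_imp fun hi => hA (hX.subset j hi)]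
  refine ⟨σ, fun i => ?_, fun j => ?_, ?_⟩
  · simp only [Option.ne_none_iff_exists', hσ, mem_biUnion, mem_univ, true_and]
  · rw [knapWeight, ← sum_filter, hfilter]
    exact hX.weight_le j
  · simp only [assignValue_eq_sum_filter, hfilter]

lemma IsPacking.sum_le_gapOPT (hX : IsPacking C w A X) (hA : A ⊆ E) :
    ∑ j, ∑ i ∈ X j, v i j ≤ gapOPT E C v w A := by
  obtain ⟨σ, hdom, hweight, hvalue⟩ := hX.exists_assignment hA
  rw [← hvalue]
  refine le_csSup ?_ ⟨σ, fun i hi => ?_, hweight, rfl⟩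
  · simp only [← and_assoc]
    exact (finite_setOf_assignValue E v _).bddAbove
  · obtain ⟨j, -, hj⟩ := mem_biUnion.1 ((hdom i).1 hi)
    exact hX.subset j hj

lemma exists_isPacking_eq_gapOPT (E : Finset ι) (hC : ∀ j, 0 ≤ C j) (v w : ι → Fin m → ℝ)
    (A : Finset ι) :
    ∃ X, IsPacking C w (A ∩ E) X ∧ ∑ j, ∑ i ∈ X j, v i j = gapOPT E C v w A := by
  have hnonempty : {x : ℝ | ∃ σ : ι → Option (Fin m), (∀ i, σ i ≠ none → i ∈ A) ∧
      (∀ j, knapWeight E w σ j ≤ C j) ∧ x = assignValue E v σ}.Nonempty :=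
    ⟨0, fun _ => none, by simp, fun j => by simpa [knapWeight] using hC j, by simp [assignValue]⟩
  obtain ⟨σ, hdom, hweight, hvalue⟩ := hnonempty.csSup_mem <| by
    simp only [← and_assoc]
    exact finite_setOf_assignValue E v _
  refine ⟨fun j => {i ∈ E | σ i = some j}, ⟨fun j i hi => ?_, fun j j' hjj' => ?_, fun j => ?_⟩, ?_⟩
  · obtain ⟨hi, hσ⟩ := mem_filter.1 hi
    exact mem_inter.2 ⟨hdom i (by simp [hσ]), hi⟩
  · refine disjoint_filter.2 fun i _ hi hi' => hjj' ?_
    exact Option.some_injective _ (hi.symm.trans hi')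
  · simpa only [knapWeight, sum_filter] using hweight j
  · rw [← assignValue_eq_sum_filter]
    exact hvalue.symm

lemma gapOPT_nonneg (E : Finset ι) (hC : ∀ j, 0 ≤ C j) (hv : ∀ i j, 0 ≤ v i j)
    (w : ι → Fin m → ℝ) (A : Finset ι) : 0 ≤ gapOPT E C v w A := by
  obtain ⟨X, -, hX⟩ := exists_isPacking_eq_gapOPT E hC v w A
  rw [← hX]
  exact sum_nonneg fun j _ => sum_nonneg fun i _ => hv i j

lemma IsPacking.indicator_mem (hX : IsPacking C w E X) :
    (fun i => if i ∈ univ.biUnion X then (1 : ℝ) else 0) ∈ feasibleIndicators E C w := by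
  obtain ⟨σ, hdom, hweight, -⟩ := hX.exists_assignment (v := w) Subset.rfl
  exact ⟨_, biUnion_subset.2 fun j _ => hX.subset j, ⟨σ, hdom, hweight⟩, rfl⟩

end Packing

section Degree

variable {ι : Type*} {S : Finset ι} {c d : ℝ}

lemma sum_filter_update_insert [DecidableEq ι] {β : Type*} [DecidableEq β] {a : ι}
    (ha : a ∉ S) (f : ι → β) (b b' : β) (w : ι → ℝ) :
    ∑ i ∈ insert a S with Function.update f a b i = b', w i =
      (if b = b' then w a else 0) + ∑ i ∈ S with f i = b', w i := by
  simp only [sum_filter]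
  rw [sum_insert ha, Function.update_self]
  refine congrArg _ (sum_congr rfl fun i hi => ?_)
  rw [Function.update_of_ne (ne_of_mem_of_not_mem hi ha)]

-- Next fit: consecutive bins together exceed the capacity.
lemma exists_nextFit {w : ι → ℝ} (hc : 0 ≤ c) (hw : ∀ i ∈ S, w i ∈ Set.Icc 0 c) :
    ∃ (n : ℕ) (f : ι → ℕ), (∀ i, f i ≤ n) ∧ (∀ b, ∑ i ∈ S with f i = b, w i ≤ c) ∧
      n * c + ∑ i ∈ S with f i = n, w i ≤ 2 * ∑ i ∈ S, w i := by
  classical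
  induction S using Finset.induction_on with
  | empty => exact ⟨0, fun _ => 0, by simp, by simpa using hc, by simp⟩
  | insert a S ha ih =>
    obtain ⟨n, f, hfn, hfit, hcount⟩ := ih fun i hi => hw i (mem_insert_of_mem hi)
    obtain ⟨ha₀, ha₁⟩ := hw a (mem_insert_self a S)
    simp only [sum_insert ha]
    rcases le_or_gt (w a + ∑ i ∈ S with f i = n, w i) c with hroom | hfull
    · refine ⟨n, Function.update f a n, fun i => ?_, fun b => ?_, ?_⟩
      · rw [Function.update_apply]
        split_ifs
        exacts [le_rfl, hfn i]
      · rw [sum_filter_update_insert ha]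
        split_ifs with h
        · exact h ▸ hroom
        · simpa using hfit b
      · rw [sum_filter_update_insert ha, if_pos rfl]
        linarith
    · have hnew : ∑ i ∈ S with f i = n + 1, w i = 0 := by
        rw [filter_false_of_mem fun i _ h => by linarith [hfn i], sum_empty]
      refine ⟨n + 1, Function.update f a (n + 1), fun i => ?_, fun b => ?_, ?_⟩
      · rw [Function.update_apply]
        split_ifs
        exacts [le_rfl, (hfn i).trans n.le_succ]
      · rw [sum_filter_update_insert ha]
        split_ifs with h
        · rwa [← h, hnew, add_zero]
        · simpa using hfit b
      · rw [sum_filter_update_insert ha, if_pos rfl, hnew]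
        push_cast
        linarith

lemma exists_binPacking {w : ι → ℝ} (hc : 0 < c) (hw : ∀ i ∈ S, w i ∈ Set.Icc 0 c)
    (hd : 2 * ∑ i ∈ S, w i + c ≤ d * c) :
    ∃ f : ι → Fin ⌊d⌋₊, ∀ b, ∑ i ∈ S with f i = b, w i ≤ c := by
  obtain ⟨n, f, hfn, hfit, hcount⟩ := exists_nextFit hc.le hw
  have hload : 0 ≤ ∑ i ∈ S with f i = n, w i :=
    sum_nonneg fun i hi => (hw i (mem_filter.1 hi).1).1
  have hn : n < ⌊d⌋₊ := by
    refine Nat.le_floor (le_of_mul_le_mul_right ?_ hc)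
    push_cast
    linarith
  refine ⟨fun i => ⟨f i, (hfn i).trans_lt hn⟩, fun b => ?_⟩
  simpa only [Fin.ext_iff] using hfit b

lemma inv_smul_sum_mem_of_zero_mem {V : Type*} [AddCommGroup V] [Module ℝ V] {s : Set V}
    (hs : Convex ℝ s) (h₀ : 0 ∈ s) {n : ℕ} {x : Fin n → V} (hx : ∀ b, x b ∈ s) (hn : n ≤ d) :
    d⁻¹ • ∑ b, x b ∈ s := by
  rcases n.eq_zero_or_pos with rfl | hpos
  · simpa using h₀
  have hpos' : (0 : ℝ) < n := by exact_mod_cast hpos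
  have hd : 0 < d := hpos'.trans_le hn
  have hmean : ∑ b, (n : ℝ)⁻¹ • x b ∈ s :=
    hs.sum_mem (fun _ _ => by positivity) (by simp [hpos'.ne']) fun b _ => hx b
  have hscale := hs.smul_mem_of_zero_mem h₀ hmean (t := n / d)
    ⟨by positivity, (div_le_one hd).2 hn⟩
  rwa [← smul_sum, smul_smul, div_mul_eq_mul_div, mul_inv_cancel₀ hpos'.ne', one_div] at hscale

variable [DecidableEq ι]

lemma sum_indicator_biUnion_filter {κ β : Type*} [Fintype κ] [Fintype β] [DecidableEq β]
    {S : κ → Finset ι} (hdisj : Pairwise (Disjoint on S)) (f : κ → ι → β) (i : ι) :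
    ∑ b, (if i ∈ univ.biUnion fun j => {i ∈ S j | f j i = b} then (1 : ℝ) else 0) =
      if i ∈ univ.biUnion S then 1 else 0 := by
  simp only [mem_biUnion, mem_univ, true_and, mem_filter]
  split_ifs with hi
  · obtain ⟨j, hj⟩ := hi
    have hiff : ∀ b, (∃ j', i ∈ S j' ∧ f j' i = b) ↔ f j i = b := fun b => by
      refine ⟨?_, fun h => ⟨j, hj, h⟩⟩
      rintro ⟨j', hj', rfl⟩
      by_contra hne
      exact disjoint_left.1 (hdisj fun h => hne (by rw [h])) hj hj'
    simp only [hiff, sum_ite_eq, mem_univ, if_true]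
  · exact sum_eq_zero fun b _ => if_neg fun ⟨j, hj, _⟩ => hi ⟨j, hj⟩

theorem inv_mul_indicator_mem_convexHull {m : ℕ} {E : Finset ι} {C : Fin m → ℝ}
    {w : ι → Fin m → ℝ} {S : Fin m → Finset ι} (hC : ∀ j, 0 < C j)
    (hdisj : Pairwise (Disjoint on S)) (hSE : ∀ j, S j ⊆ E)
    (hw : ∀ j, ∀ i ∈ S j, w i j ∈ Set.Icc 0 (C j)) (hd₀ : 0 ≤ d)
    (hd : ∀ j, 2 * ∑ i ∈ S j, w i j + C j ≤ d * C j) :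
    (fun i => 1 / d * if i ∈ univ.biUnion S then (1 : ℝ) else 0) ∈
      convexHull ℝ (feasibleIndicators E C w) := by
  choose f hf using fun j => exists_binPacking (hC j) (hw j) (hd j)
  have hpacking : ∀ b, IsPacking C w E fun j => {i ∈ S j | f j i = b} := fun b =>
    ⟨fun j => (filter_subset _ _).trans (hSE j),
      fun j j' hjj' => disjoint_filter_filter (hdisj hjj'), fun j => hf j b⟩
  have hempty : IsPacking C w E fun _ => ∅ :=
    ⟨fun _ => empty_subset E, fun _ _ _ => disjoint_empty_left _, fun j => by simpa using (hC j).le⟩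
  have hmem := inv_smul_sum_mem_of_zero_mem (convex_convexHull ℝ (feasibleIndicators E C w))
    (subset_convexHull ℝ _ (by simpa [Pi.zero_def] using hempty.indicator_mem))
    (fun b => subset_convexHull ℝ _ (hpacking b).indicator_mem)
    (Nat.floor_le hd₀)
  convert hmem using 1
  ext i
  rw [Pi.smul_apply, Finset.sum_apply, sum_indicator_biUnion_filter hdisj, smul_eq_mul, one_div]

end Degree

section Phase

variable {ι : Type*} [DecidableEq ι] {m T : ℕ} {E Q Z A : Finset ι} {C : Fin m → ℝ}
  {v w : ι → Fin m → ℝ} {F U : Fin m → Finset ι} {X : Finset ι → Fin m → Finset ι} {p ε : ℝ}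

theorem sum_le_sampleExp_gapOPT (hp₀ : 0 ≤ p) (hp₁ : p ≤ 1) (hQ : Q ⊆ E) (hZQ : Z ⊆ Q)
    (hF : ∀ j, F j ⊆ Q ∩ A) (hU : ∀ j, U j ⊆ Z)
    (hdisj : Pairwise (Disjoint on fun j => F j ∪ U j)) {y : Fin m → ℝ}
    (h : ∀ j, HasRecourse Z p (v · j) (w · j) (F j) (U j) (C j) (y j)) :
    ∑ j, y j ≤ sampleExp Z p fun B => gapOPT E C v w (Q ∩ (A ∪ B)) := by
  choose N hN hweight hvalue using h
  have hpacking : ∀ B, IsPacking C w (Q ∩ (A ∪ B)) (N · B) := fun B =>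
    { subset := fun j => (hN j B).trans <| union_subset
        ((hF j).trans (inter_subset_inter_left subset_union_left))
        (subset_inter ((inter_subset_right.trans (hU j)).trans hZQ)
          (inter_subset_left.trans subset_union_right))
      disjoint := fun j j' hjj' =>
        (hdisj hjj').mono ((hN j B).trans (union_subset_union_right inter_subset_right))
          ((hN j' B).trans (union_subset_union_right inter_subset_right))
      weight_le := fun j => hweight j B }
  calc ∑ j, y j ≤ ∑ j, sampleExp Z p fun B => ∑ i ∈ N j B, v i j :=
        sum_le_sum fun j _ => hvalue j
    _ = sampleExp Z p fun B => ∑ j, ∑ i ∈ N j B, v i j := (sampleExp_sum ..).symm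
    _ ≤ _ := sampleExp_mono hp₀ hp₁ fun B _ =>
        (hpacking B).sum_le_gapOPT (inter_subset_left.trans hQ)

/-- The active part of `Z` is only used as a reservoir: resampling it makes it independent of the
optimal packing that is being imitated. -/
theorem sum_affine_le_sampleExp_gapOPT (hp₀ : 0 ≤ p) (hp₁ : p ≤ 1) (hw : ∀ i j, 0 ≤ w i j)
    (hQ : Q ⊆ E) (hZQ : Z ⊆ Q) (hX : ∀ R, IsPacking C w (R ∩ E) (X R)) (hU : ∀ j, U j ⊆ Z)
    (hdisj : Pairwise (Disjoint on U)) {α β : Fin m → ℝ}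
    (h : ∀ j, ∀ Y ⊆ E, Disjoint Y (U j) → ∑ i ∈ Y, w i j ≤ C j →
      HasRecourse Z p (v · j) (w · j) (Y ∩ Q) (U j) (C j) (α j * ∑ i ∈ Y, v i j + β j)) :
    ∑ j, (α j * sampleExp E p (fun R => ∑ i ∈ X R j \ Z, v i j) + β j) ≤
      sampleExp E p fun R => gapOPT E C v w (Q ∩ R) := by
  have hlinear : ∑ j, (α j * sampleExp E p (fun R => ∑ i ∈ X R j \ Z, v i j) + β j) =
      sampleExp E p fun R => ∑ j, (α j * ∑ i ∈ X R j \ Z, v i j + β j) := by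
    simp only [sampleExp_sum, sampleExp_add, sampleExp_mul_left, sampleExp_const]
  rw [hlinear]
  refine sampleExp_le_of_resample hp₀ hp₁ (hZQ.trans hQ) fun A _ B' hB' => ?_
  have hXE : ∀ j, X (A ∪ B') j ⊆ E := fun j => ((hX _).subset j).trans inter_subset_right
  have hXA : ∀ j, X (A ∪ B') j \ Z ⊆ A := fun j i hi => by
    obtain ⟨hi, hiZ⟩ := mem_sdiff.1 hi
    exact (mem_union.1 (mem_inter.1 ((hX _).subset j hi)).1).resolve_right fun h => hiZ (hB' h)
  have hXU : ∀ j j', Disjoint (X (A ∪ B') j \ Z) (U j') := fun j j' =>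
    sdiff_disjoint.mono_right (hU j')
  refine sum_le_sampleExp_gapOPT hp₀ hp₁ hQ hZQ (F := fun j => (X (A ∪ B') j \ Z) ∩ Q)
    (fun j => ?_) hU (fun j j' hjj' => ?_) fun j => h j _ (sdiff_subset.trans (hXE j)) (hXU j j) ?_
  · rw [inter_comm]
    exact inter_subset_inter_left (hXA j)
  · have hXX : Disjoint (X (A ∪ B') j \ Z) (X (A ∪ B') j' \ Z) :=
      ((hX _).disjoint hjj').mono sdiff_subset sdiff_subset
    refine Disjoint.mono (union_subset_union_left inter_subset_left)
      (union_subset_union_left inter_subset_left) ?_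
    simp only [disjoint_union_left, disjoint_union_right]
    exact ⟨⟨hXX, (hXU j' j).symm⟩, hXU j j', hdisj hjj'⟩
  · exact (sum_le_sum_of_subset_of_nonneg sdiff_subset fun i _ _ => hw i j).trans
      ((hX _).weight_le j)

lemma exists_phase_one_sub_mul_le (hp₀ : 0 ≤ p) (hp₁ : p ≤ 1) (hv : ∀ i j, 0 ≤ v i j)
    (hT : 1 ≤ ε * T) {Z : Fin T → Finset ι} (hZ : Pairwise (Disjoint on Z))
    (X : Finset ι → Fin m → Finset ι) :
    ∃ t, (1 - ε) * ∑ j, sampleExp E p (fun R => ∑ i ∈ X R j, v i j) ≤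
      ∑ j, sampleExp E p fun R => ∑ i ∈ X R j \ Z t, v i j := by
  set lost : Fin T → ℝ := fun t => ∑ j, sampleExp E p fun R => ∑ i ∈ X R j ∩ Z t, v i j
  set total : ℝ := ∑ j, sampleExp E p fun R => ∑ i ∈ X R j, v i j
  have hlost : ∑ t, lost t ≤ total := by
    rw [sum_comm]
    refine sum_le_sum fun j _ => ?_
    rw [← sampleExp_sum]
    refine sampleExp_mono hp₀ hp₁ fun R _ => ?_
    rw [← sum_biUnion fun t _ t' _ htt' => (hZ htt').mono inter_subset_right inter_subset_right]
    exact sum_le_sum_of_subset_of_nonneg (biUnion_subset.2 fun t _ => inter_subset_left)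
      fun i _ _ => hv i j
  have htotal : 0 ≤ total := sum_nonneg fun j _ => sampleExp_nonneg hp₀ hp₁ fun R _ =>
    sum_nonneg fun i _ => hv i j
  have hT₀ : T ≠ 0 := by
    rintro rfl
    norm_num at hT
  have : NeZero T := ⟨hT₀⟩
  obtain ⟨t, -, ht⟩ := exists_le_of_sum_le (s := univ) (f := lost) (g := fun _ => ε * total)
    univ_nonempty (by
      rw [sum_const, card_univ, Fintype.card_fin, nsmul_eq_mul]
      nlinarith)
  refine ⟨t, ?_⟩
  have hsplit : ∑ j, sampleExp E p (fun R => ∑ i ∈ X R j \ Z t, v i j) = total - lost t := by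
    simp only [total, lost, ← sum_sub_distrib, ← sampleExp_sub]
    refine sum_congr rfl fun j _ => sampleExp_congr fun R _ => ?_
    rw [eq_sub_iff_add_eq', sum_inter_add_sum_sdiff]
  rw [hsplit]
  linarith

end Phase

section Reservoir

variable {ι : Type*} [DecidableEq ι] {m T K : ℕ} {E : Finset ι} {C V : Fin m → ℝ}
  {v w : ι → Fin m → ℝ} {p ε : ℝ} {L : Fin T × Fin m × Fin (K + 1) → Finset ι}

/-- The items to be queried, organised in disjoint lists `L (t, j, k)`: in phase `t`, a greedy list
of total weight about `tau (ε ^ 2) / p` times the capacity is drawn for the value class `k` of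
knapsack `j`. `V j` is the expected value of knapsack `j` in an optimal solution. -/
structure IsReservoir (E : Finset ι) (C : Fin m → ℝ) (v w : ι → Fin m → ℝ) (p ε : ℝ)
    (V : Fin m → ℝ) (L : Fin T × Fin m × Fin (K + 1) → Finset ι) : Prop where
  disjoint : Pairwise (Disjoint on L)
  greedy : ∀ t j k, IsGreedyList
    (classItems E (v · j) (w · j) (C j) (ε ^ 2) (ε * V j) K k) (univ.biUnion L)
    (classKey (v · j) (w · j) k) (w · j) (tau (ε ^ 2) / p * C j) (C j) (L (t, j, k))

theorem exists_isReservoir (T K : ℕ) (E : Finset ι) (hC : ∀ j, 0 ≤ C j) (v w : ι → Fin m → ℝ)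
    (hθ : 0 ≤ tau (ε ^ 2) / p) (V : Fin m → ℝ) :
    ∃ L : Fin T × Fin m × Fin (K + 1) → Finset ι, IsReservoir E C v w p ε V L := by
  obtain ⟨L, hdisj, hL⟩ := exists_pairwise_disjoint_isGreedyList
    (fun a : Fin T × Fin m × Fin (K + 1) =>
      classItems E (v · a.2.1) (w · a.2.1) (C a.2.1) (ε ^ 2) (ε * V a.2.1) K a.2.2)
    (fun a => classKey (v · a.2.1) (w · a.2.1) a.2.2) (fun a => (w · a.2.1))
    (fun a => tau (ε ^ 2) / p * C a.2.1) (fun a => C a.2.1)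
    (fun a => add_nonneg (mul_nonneg hθ (hC _)) (hC _)) fun a i hi => (mem_filter.1 hi).2.1
  exact ⟨L, hdisj, fun t j k => hL (t, j, k)⟩

lemma pairwise_disjoint_biUnion {α β γ : Type*} [Fintype γ] {L : α → Finset ι}
    (hL : Pairwise (Disjoint on L)) {f : β → γ → α} (hf : Function.Injective2 f) :
    Pairwise (Disjoint on fun b => univ.biUnion fun c => L (f b c)) := fun b b' hbb' => by
  simp only [Function.onFun, disjoint_biUnion_left, disjoint_biUnion_right]
  exact fun c _ c' _ => hL fun h => hbb' (hf h).1

lemma IsReservoir.mem_and_weight_le (hL : IsReservoir E C v w p ε V L)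
    {a : Fin T × Fin m × Fin (K + 1)} {i : ι} (hi : i ∈ L a) : i ∈ E ∧ w i a.2.1 ≤ C a.2.1 := by
  obtain ⟨hE, hC, -⟩ := mem_filter.1 ((hL.greedy a.1 a.2.1 a.2.2).subset hi)
  exact ⟨hE, hC⟩

lemma IsReservoir.biUnion_subset (hL : IsReservoir E C v w p ε V L) : univ.biUnion L ⊆ E :=
  Finset.biUnion_subset.2 fun _ _ _ hi => (hL.mem_and_weight_le hi).1

lemma injective2_prod_insert (α β γ : Type*) :
    Function.Injective2 fun (b : β) (a : α × γ) => (a.1, b, a.2) := by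
  rintro b b' ⟨a, c⟩ ⟨a', c'⟩ h
  simp only [Prod.mk.injEq] at h
  simp [h]

lemma IsReservoir.sum_knapsack_le (hL : IsReservoir E C v w p ε V L) (j : Fin m) :
    ∑ i ∈ univ.biUnion fun a : Fin T × Fin (K + 1) => L (a.1, j, a.2), w i j ≤
      T * (K + 1) * (tau (ε ^ 2) / p + 1) * C j := by
  have hdisj : Pairwise (Disjoint on fun a : Fin T × Fin (K + 1) => L (a.1, j, a.2)) :=
    hL.disjoint.comp_of_injective ((injective2_prod_insert _ _ _).right j)
  rw [sum_biUnion (hdisj.set_pairwise _)]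
  refine (sum_le_card_nsmul _ _ _ fun a _ => (hL.greedy a.1 j a.2).weight_le).trans_eq ?_
  simp only [card_univ, Fintype.card_prod, Fintype.card_fin, nsmul_eq_mul]
  push_cast
  ring

theorem IsReservoir.indicator_mem_convexHull (hL : IsReservoir E C v w p ε V L)
    (hC : ∀ j, 0 < C j) (hw : ∀ i j, 0 ≤ w i j) (hT : 1 ≤ T) (hθ : 0 ≤ tau (ε ^ 2) / p) :
    (fun i => 1 / (2 * T * (K + 2) * (tau (ε ^ 2) / p + 1)) *
      if i ∈ univ.biUnion L then (1 : ℝ) else 0) ∈ convexHull ℝ (feasibleIndicators E C w) := by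
  set S : Fin m → Finset ι := fun j =>
    univ.biUnion fun a : Fin T × Fin (K + 1) => L (a.1, j, a.2) with hS
  have hunion : univ.biUnion S = univ.biUnion L := by
    ext i
    simp only [hS, mem_biUnion, mem_univ, true_and, Prod.exists]
    exact exists_comm
  have hmem : ∀ j, ∀ i ∈ S j, i ∈ E ∧ w i j ≤ C j := fun j i hi => by
    obtain ⟨a, -, ha⟩ := mem_biUnion.1 hi
    exact hL.mem_and_weight_le ha
  have hT' : (1 : ℝ) ≤ T := by exact_mod_cast hT
  rw [← hunion]
  refine inv_mul_indicator_mem_convexHull hC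
    (pairwise_disjoint_biUnion hL.disjoint (injective2_prod_insert _ _ _))
    (fun j i hi => (hmem j i hi).1) (fun j i hi => ⟨hw i j, (hmem j i hi).2⟩) (by positivity)
    fun j => ?_
  have hslack : C j ≤ 2 * T * (tau (ε ^ 2) / p + 1) * C j :=
    le_mul_of_one_le_left (hC j).le (by nlinarith)
  linarith [hL.sum_knapsack_le j]

theorem IsReservoir.one_sub_mul_le_sampleExp_gapOPT (hL : IsReservoir E C v w p ε V L)
    (hp₀ : 0 < p) (hp₁ : p ≤ 1) (hε : ε ∈ Set.Ioo (0 : ℝ) (1 / 3))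
    (hK : 1 / ε ^ 3 ≤ (1 + ε ^ 2) ^ K) (hT : 1 ≤ ε * T) (hC : ∀ j, 0 < C j)
    (hv : ∀ i j, 0 ≤ v i j) (hw : ∀ i j, 0 ≤ w i j) {X : Finset ι → Fin m → Finset ι}
    (hX : ∀ R, IsPacking C w (R ∩ E) (X R))
    (hV : ∀ j, V j = sampleExp E p fun R => ∑ i ∈ X R j, v i j) :
    (1 - 3 * ε) * ∑ j, V j ≤ sampleExp E p fun R => gapOPT E C v w (univ.biUnion L ∩ R) := by
  have hV₀ : ∀ j, 0 ≤ V j := fun j => by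
    rw [hV]
    exact sampleExp_nonneg hp₀.le hp₁ fun R _ => sum_nonneg fun i _ => hv i j
  have hphases := pairwise_disjoint_biUnion (f := Prod.mk) hL.disjoint fun _ _ _ _ => Prod.mk.inj
  obtain ⟨t, ht⟩ := exists_phase_one_sub_mul_le (E := E) hp₀.le hp₁ hv hT hphases X
  simp only [← hV] at ht
  have hlists : Pairwise (Disjoint on fun a => L (t, a)) :=
    hL.disjoint.comp_of_injective (Prod.mk_right_injective t)
  set Z : Finset ι := univ.biUnion fun a => L (t, a)
  have hLZ : ∀ j k, L (t, j, k) ⊆ Z := fun j k =>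
    subset_biUnion_of_mem (fun a => L (t, a)) (mem_univ (j, k))
  choose α β hα hrecourse using fun j => exists_affine_hasRecourse (L := fun k => L (t, j, k))
    hp₀ hp₁ hε hK (hV₀ j) (hC j) (hv · j) (hw · j)
    (hlists.comp_of_injective (Prod.mk_right_injective j)) (hLZ j) (hL.greedy t j)
  set r : Fin m → ℝ := fun j => sampleExp E p fun R => ∑ i ∈ X R j \ Z, v i j
  have hr₀ : ∀ j, 0 ≤ r j := fun j =>
    sampleExp_nonneg hp₀.le hp₁ fun R _ => sum_nonneg fun i _ => hv i j
  have hr₁ : ∀ j, r j ≤ V j := fun j => (sampleExp_mono hp₀.le hp₁ fun R _ =>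
    sum_le_sum_of_subset_of_nonneg sdiff_subset fun i _ _ => hv i j).trans_eq (hV j).symm
  calc (1 - 3 * ε) * ∑ j, V j ≤ (1 - 2 * ε ^ 2) * ∑ j, r j - ε * ∑ j, V j := by
        have hfactor : 0 ≤ 1 - 2 * ε ^ 2 := by nlinarith [hε.1, hε.2]
        have hslack : 0 ≤ ε * (1 - 2 * ε * (1 - ε)) := mul_nonneg hε.1.le (by nlinarith [hε.1])
        have hsum : 0 ≤ ∑ j, V j := sum_nonneg fun j _ => hV₀ j
        nlinarith [mul_le_mul_of_nonneg_left ht hfactor, mul_nonneg hslack hsum]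
    _ = ∑ j, ((1 - 2 * ε ^ 2) * r j - ε * V j) := by rw [sum_sub_distrib, mul_sum, mul_sum]
    _ ≤ ∑ j, (α j * r j + β j) := sum_le_sum fun j _ => hα j (r j) (hr₀ j) (hr₁ j)
    _ ≤ _ := sum_affine_le_sampleExp_gapOPT hp₀.le hp₁ hw hL.biUnion_subset
        (Finset.biUnion_subset.2 fun a _ => subset_biUnion_of_mem L (mem_univ _)) hX
        (fun j => Finset.biUnion_subset.2 fun k _ => hLZ j k)
        (pairwise_disjoint_biUnion (f := Prod.mk) hlists fun _ _ _ _ => Prod.mk.inj) hrecourse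

end Reservoir

theorem gap_sparsifier_general {ι : Type*} [DecidableEq ι] {m : ℕ}
    (E : Finset ι) (C : Fin m → ℝ) (hC : ∀ j, 0 < C j)
    (v w : ι → Fin m → ℝ) (hv : ∀ i j, 0 ≤ v i j) (hw : ∀ i j, 0 ≤ w i j)
    (ε p : ℝ) (hε : ε ∈ Set.Ioo (0 : ℝ) (1 / 3)) (hp : p ∈ Set.Ioc (0 : ℝ) 1) :
    ∃ (Q : Finset ι) (d : ℝ), Q ⊆ E ∧ 1 ≤ d ∧
      d ≤ 2 * (⌈1 / ε⌉₊ : ℝ) *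
          ((⌈Real.log (1 / ε ^ 3) / Real.log (1 + ε ^ 2)⌉₊ : ℝ) + 2) *
          (tau (ε ^ 2) / p + 1) ∧
      (fun i => (1 / d) * (if i ∈ Q then (1 : ℝ) else 0)) ∈
        convexHull ℝ (feasibleIndicators E C w) ∧
      (1 - 3 * ε) * sampleExp E p (fun A => gapOPT E C v w A)
        ≤ sampleExp E p (fun A => gapOPT E C v w (Q ∩ A)) := by
  obtain ⟨⟨hε₀, hε₁⟩, hp₀, hp₁⟩ := And.intro hε hp
  have hτ : 1 ≤ tau (ε ^ 2) := one_le_tau (by positivity) (by nlinarith)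
  have hθ : 0 ≤ tau (ε ^ 2) / p := by positivity
  have hT : 1 ≤ ⌈1 / ε⌉₊ := Nat.one_le_ceil_iff.2 (by positivity)
  have hεT : 1 ≤ ε * ⌈1 / ε⌉₊ := (div_le_iff₀' hε₀).1 (Nat.le_ceil _)
  set K := ⌈Real.log (1 / ε ^ 3) / Real.log (1 + ε ^ 2)⌉₊ with hKdef
  have hK : 1 / ε ^ 3 ≤ (1 + ε ^ 2) ^ K := by
    rw [← natCeil_logb_le_iff (lt_add_of_pos_right 1 (by positivity)) (by positivity), hKdef,
      Real.log_div_log]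
  choose X hX hXopt using exists_isPacking_eq_gapOPT E (fun j => (hC j).le) v w
  obtain ⟨L, hL⟩ := exists_isReservoir ⌈1 / ε⌉₊ K E (fun j => (hC j).le) v w hθ
    fun j => sampleExp E p fun R => ∑ i ∈ X R j, v i j
  refine ⟨univ.biUnion L, _, hL.biUnion_subset, ?_, le_rfl,
    hL.indicator_mem_convexHull hC hw hT hθ, ?_⟩
  · have hT' : (1 : ℝ) ≤ ⌈1 / ε⌉₊ := by exact_mod_cast hT
    exact one_le_mul_of_one_le_of_one_le (by nlinarith [Nat.cast_nonneg (α := ℝ) K]) (by linarith)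
  · rw [← sampleExp_congr fun R _ => hXopt R, sampleExp_sum]
    exact hL.one_sub_mul_le_sampleExp_gapOPT hp₀ hp₁ hε hK hεT hC hv hw hX fun _ => rfl

/-- **GAP Sparsifier** (Theorem 4.1): for every GAP instance, `ε ∈ (0,1/6)` and
`p ∈ (0,1]`, there is a query set `Q ⊆ E` of polyhedral degree
`d ≤ 2·⌈1/ε⌉·(K+2)·(τ(ε²)/p + 1)` (with `K = ⌈ln(1/ε³)/ln(1+ε²)⌉`) which is a
`(1-6ε)`-approximate sparsifier. -/
theorem gap_sparsifier {ι : Type*} [DecidableEq ι] {m : ℕ}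
    (E : Finset ι) (C : Fin m → ℝ) (hC : ∀ j, 0 < C j)
    (v w : ι → Fin m → ℝ) (hv : ∀ i j, 0 ≤ v i j) (hw : ∀ i j, 0 ≤ w i j)
    (hsomewhere : ∀ i ∈ E, ∃ j, w i j ≤ C j)
    (ε p : ℝ) (hε : ε ∈ Set.Ioo (0 : ℝ) (1 / 6)) (hp : p ∈ Set.Ioc (0 : ℝ) 1) :
    ∃ (Q : Finset ι) (d : ℝ), Q ⊆ E ∧ 1 ≤ d ∧
      d ≤ 2 * (⌈1 / ε⌉₊ : ℝ) *
          ((⌈Real.log (1 / ε ^ 3) / Real.log (1 + ε ^ 2)⌉₊ : ℝ) + 2) *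
          (tau (ε ^ 2) / p + 1) ∧
      (fun i => (1 / d) * (if i ∈ Q then (1 : ℝ) else 0)) ∈
        convexHull ℝ {x : ι → ℝ | ∃ S : Finset ι, S ⊆ E ∧
          (∃ σ : ι → Option (Fin m), (∀ i, σ i ≠ none ↔ i ∈ S) ∧
            (∀ j, knapWeight E w σ j ≤ C j)) ∧
          x = fun i => if i ∈ S then (1 : ℝ) else 0} ∧
      (1 - 6 * ε) * sampleExp E p (fun A => gapOPT E C v w A)
        ≤ sampleExp E p (fun A => gapOPT E C v w (Q ∩ A)) := by
  obtain ⟨Q, d, hQ, hd, hd', hhull, hvalue⟩ := gap_sparsifier_general E C hC v w hv hw ε p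
    ⟨hε.1, hε.2.trans (by norm_num)⟩ hp
  have hopt : 0 ≤ sampleExp E p fun A => gapOPT E C v w A :=
    sampleExp_nonneg hp.1.le hp.2 fun A _ => gapOPT_nonneg E (fun j => (hC j).le) hv w A
  exact ⟨Q, d, hQ, hd, hd', hhull,
    (mul_le_mul_of_nonneg_right (by linarith [hε.1]) hopt).trans hvalue⟩
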